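/- With $H_{\boldsymbol{\lambda}}$ presented as above, the combined localization map $H_{\boldsymbol{\lambda}}\to\prod_{I\in\mathcal{I}_{\boldsymbol{\lambda}}}\mathbb{C}[z_1,\dots,z_n]$, $[h]\mapsto (h(z;z_{I_1},\dots,z_{I_N}))_{I}$, is injective. -/

import Mathlib

open Finset MvPolynomial

/-- The defining relation of `H_λ = H^*_{GL_n}(F_λ)`. -/
noncomputable def relPoly (N n : ℕ) (lam : Fin N → ℕ) :
    Polynomial (MvPolynomial (Fin n ⊕ (Σ i : Fin N, Fin (lam i))) ℂ) :=
  (∏ v : Σ i : Fin N, Fin (lam i), (1 + Polynomial.X * Polynomial.C (X (Sum.inr v))))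
    - ∏ s : Fin n, (1 + Polynomial.X * Polynomial.C (X (Sum.inl s)))

/-- The ideal `𝒥` generated by the coefficients of the defining relation. -/
noncomputable def relIdeal (N n : ℕ) (lam : Fin N → ℕ) :
    Ideal (MvPolynomial (Fin n ⊕ (Σ i : Fin N, Fin (lam i))) ℂ) :=
  Ideal.span (Set.range fun k => (relPoly N n lam).coeff k)

lemma coeff_prod_aux {R ι : Type*} [CommRing R] [Fintype ι] (a : ι → R) (k : ℕ) :
    (∏ v : ι, (1 + Polynomial.X * Polynomial.C (a v))).coeff k
      = ∑ t ∈ powersetCard k (univ : Finset ι), ∏ i ∈ t, a i := by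
  classical
  rw [Finset.prod_one_add, Polynomial.finsetSum_coeff, Finset.powersetCard_eq_filter,
    Finset.sum_filter]
  refine Finset.sum_congr rfl fun t _ => ?_
  rw [Finset.prod_mul_distrib, Finset.prod_const, ← map_prod, Polynomial.coeff_mul_C,
    Polynomial.coeff_X_pow]
  by_cases h : t.card = k
  · simp [h]
  · simp [h, Ne.symm h]

lemma rel_aux (N n : ℕ) (lam : Fin N → ℕ) (k : ℕ) :
    Ideal.Quotient.mk (relIdeal N n lam)
        (∑ t ∈ powersetCard k (univ : Finset (Fin n)), ∏ i ∈ t, X (Sum.inl i)) =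
      Ideal.Quotient.mk (relIdeal N n lam)
        (∑ t ∈ powersetCard k (univ : Finset (Σ i : Fin N, Fin (lam i))),
          ∏ i ∈ t, X (Sum.inr i)) := by
  symm
  rw [Ideal.Quotient.eq, ← coeff_prod_aux, ← coeff_prod_aux, ← Polynomial.coeff_sub]
  exact Ideal.subset_span ⟨k, rfl⟩

lemma sum_powersetCard_equiv {R ι κ : Type*} [CommRing R] [Fintype ι] [Fintype κ]
    (e : ι ≃ κ) (a : ι → R) (k : ℕ) :
    ∑ t ∈ powersetCard k (univ : Finset κ), ∏ i ∈ t, a (e.symm i) =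
      ∑ t ∈ powersetCard k (univ : Finset ι), ∏ i ∈ t, a i := by
  rw [← coeff_prod_aux, ← coeff_prod_aux]
  congr 1
  exact Fintype.prod_equiv e.symm _ _ fun _ => rfl

/-- The combined localization map `H_λ → ∏_{I ∈ I_λ} ℂ[z_1,…,z_n]`,
`[h] ↦ (h(z; z_{I_1},…,z_{I_N}))_I`, is injective: if a class of
`H_λ = ℂ[z;Γ_1;…;Γ_N]^{S_n × S_{λ_1} × ⋯ × S_{λ_N}}/𝒥` (represented by an invariant
polynomial `p`) restricts to zero at every fixed point, then `p ∈ 𝒥`. -/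
theorem stmt15 (N n : ℕ) (lam : Fin N → ℕ) (hsum : ∑ i, lam i = n)
    (p : MvPolynomial (Fin n ⊕ (Σ i : Fin N, Fin (lam i))) ℂ)
    (hinv : ∀ (σ : Equiv.Perm (Fin n)) (π : Equiv.Perm (Σ i : Fin N, Fin (lam i))),
      (∀ v, (π v).1 = v.1) → rename (Equiv.sumCongr σ π) p = p)
    (hloc : ∀ (f : Fin n → Fin N) (e : (Σ i : Fin N, Fin (lam i)) → Fin n),
      (∀ j, (univ.filter fun a => f a = j).card = lam j) →
      Function.Injective e → (∀ v, f (e v) = v.1) →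
      aeval (Sum.elim X fun v => (X (e v) : MvPolynomial (Fin n) ℂ)) p = 0) :
    p ∈ relIdeal N n lam := by
  classical
  have hcard : Fintype.card (Σ i : Fin N, Fin (lam i)) = Fintype.card (Fin n) := by
    simp [hsum]
  let e : (Σ i : Fin N, Fin (lam i)) ≃ Fin n := Fintype.equivOfCardEq hcard
  have h0 := hloc (fun a => (e.symm a).1) e (by
    intro j
    rw [← Fintype.card_fin (lam j), ← Fintype.card_subtype]
    refine Fintype.card_congr ((e.symm.subtypeEquiv (q := fun v => v.1 = j)
      (fun a => Iff.rfl)).trans (Equiv.sigmaSubtype j))) e.injective (by simp)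
  let J := relIdeal N n lam
  let g : MvPolynomial (Fin n ⊕ (Σ i : Fin N, Fin (lam i))) ℂ →ₐ[ℂ]
      MvPolynomial (Fin n ⊕ (Σ i : Fin N, Fin (lam i))) ℂ :=
    rename (Sum.elim (fun i => Sum.inr (e.symm i)) Sum.inr)
  have hg : g p = 0 := by
    have h1 : g = (rename (fun i => Sum.inr (e.symm i))).comp
        (aeval (Sum.elim X fun v => (X (e v) : MvPolynomial (Fin n) ℂ))) := by
      apply MvPolynomial.algHom_ext
      rintro (i | v) <;> simp [g]
    rw [h1, AlgHom.comp_apply, h0, map_zero]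
  let iso := sumAlgEquiv ℂ (Fin n) (Σ i : Fin N, Fin (lam i))
  have hiC : ∀ r, iso.symm (C r) = rename Sum.inr r := by
    intro r
    rw [AlgEquiv.symm_apply_eq]
    have : (IsScalarTower.toAlgHom ℂ (MvPolynomial (Σ i : Fin N, Fin (lam i)) ℂ)
        (MvPolynomial (Fin n) (MvPolynomial (Σ i : Fin N, Fin (lam i)) ℂ))) =
        iso.toAlgHom.comp (rename Sum.inr) := by
      apply MvPolynomial.algHom_ext
      intro v
      simp [iso, MvPolynomial.algebraMap_eq]
    exact DFunLike.congr_fun this r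
  have hiX : ∀ i, iso.symm (X i) = X (Sum.inl i) := by
    intro i
    rw [AlgEquiv.symm_apply_eq]
    simp [iso]
  have hsym : (iso p).IsSymmetric := by
    intro σ
    have h2 : ∀ q, iso (rename (Equiv.sumCongr σ (Equiv.refl _)) q) = rename σ (iso q) := by
      intro q
      have : iso.toAlgHom.comp (rename (Equiv.sumCongr σ (Equiv.refl _))) =
          ((rename σ : _ →ₐ[MvPolynomial (Σ i : Fin N, Fin (lam i)) ℂ] _).restrictScalars ℂ).comp
            iso.toAlgHom := by
        apply MvPolynomial.algHom_ext
        rintro (i | v) <;> simp [iso]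
      exact DFunLike.congr_fun this q
    rw [← h2, hinv σ (Equiv.refl _) (fun _ => rfl)]
  obtain ⟨Q, hQ⟩ := (esymmAlgEquiv (R := MvPolynomial (Σ i : Fin N, Fin (lam i)) ℂ)
    (Fin n) (Fintype.card_fin n)).surjective ⟨iso p, hsym⟩
  have hQ' : aeval (fun i : Fin n => esymm (Fin n)
      (MvPolynomial (Σ i : Fin N, Fin (lam i)) ℂ) (i + 1)) Q = iso p := by
    have := congrArg Subtype.val hQ
    rw [esymmAlgEquiv_apply, esymmAlgHom_apply] at this
    exact this
  have key : ((Ideal.Quotient.mk J).comp iso.symm.toAlgHom.toRingHom).comp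
        (aeval (R := MvPolynomial (Σ i : Fin N, Fin (lam i)) ℂ) (fun i : Fin n => esymm (Fin n)
          (MvPolynomial (Σ i : Fin N, Fin (lam i)) ℂ) (i + 1))).toRingHom =
      (((Ideal.Quotient.mk J).comp g.toRingHom).comp iso.symm.toAlgHom.toRingHom).comp
        (aeval (R := MvPolynomial (Σ i : Fin N, Fin (lam i)) ℂ) (fun i : Fin n => esymm (Fin n)
          (MvPolynomial (Σ i : Fin N, Fin (lam i)) ℂ) (i + 1))).toRingHom := by
    apply MvPolynomial.ringHom_ext
    · intro r
      simp only [AlgHom.toRingHom_eq_coe, RingHom.comp_apply, RingHom.coe_coe, AlgEquiv.toAlgHom_eq_coe, AlgEquiv.coe_toAlgHom, AlgHom.coe_coe, 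
        MvPolynomial.aeval_C, MvPolynomial.algebraMap_eq, hiC, g, rename_rename]
      rfl
    · intro k
      simp only [AlgHom.toRingHom_eq_coe, RingHom.comp_apply, RingHom.coe_coe, AlgEquiv.toAlgHom_eq_coe, AlgEquiv.coe_toAlgHom, AlgHom.coe_coe, aeval_X, esymm,
        map_sum iso.symm, map_prod iso.symm, hiX, map_sum g, map_prod g]
      rw [rel_aux]
      congr 1
      simp only [g, rename_X, Sum.elim_inl]
      exact (sum_powersetCard_equiv e (fun v => X (Sum.inr v)) _).symm
  have := DFunLike.congr_fun key Q
  simp only [AlgHom.toRingHom_eq_coe, RingHom.comp_apply, RingHom.coe_coe, AlgEquiv.toAlgHom_eq_coe, AlgEquiv.coe_toAlgHom, AlgHom.coe_coe, hQ',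
    AlgEquiv.symm_apply_apply, hg, map_zero] at this
  exact Ideal.Quotient.eq_zero_iff_mem.mp this
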